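/- arXiv:1702.04228 — 3 statements merged into one kernel-verified Lean document; each statement's English description precedes it below -/
import Mathlib

section
/- Quenched terms scale at most like N: for D ≥ 2 and any (D+1)-tuple σ of permutations of {1,…,k} whose D-bubble is connected, i.e. C_D(σ_D) = 1 (as required in the expansion of the quenched free energy ⟨ln Z⟩), the whole graph is connected, C(σ) = 1, and the N-exponent satisfies −(D−1)·k + F(σ) − F_D(σ_D) ≤ 1. -/
/-- Number of cycles of a permutation counting fixed points: the number of orbits
on `Fin k` of the cyclic group generated by `τ`. -/
noncomputable def cycleCount {k : ℕ} (τ : Equiv.Perm (Fin k)) : ℕ :=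
  Nat.card (MulAction.orbitRel.Quotient (Subgroup.zpowers τ) (Fin k))

/-- Total number of faces of the `(D+1)`-colored graph encoded by `σ`:
`F(σ) = Σ_{c₁ < c₂} c(σ⁽ᶜ¹⁾ ∘ (σ⁽ᶜ²⁾)⁻¹)`. -/
noncomputable def faceCount {k D : ℕ} (σ : Fin (D + 1) → Equiv.Perm (Fin k)) : ℕ :=
  ∑ p ∈ Finset.univ.filter (fun p : Fin (D + 1) × Fin (D + 1) => p.1 < p.2),
    cycleCount (σ p.1 * (σ p.2)⁻¹)

/-- Number of connected components of the `(D+1)`-colored graph encoded by `σ`: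
the number of orbits on `Fin k` of the subgroup generated by `(σ⁽⁰⁾)⁻¹ ∘ σ⁽ᶜ⁾`, `1 ≤ c ≤ D`. -/
noncomputable def compCount {k D : ℕ} (σ : Fin (D + 1) → Equiv.Perm (Fin k)) : ℕ :=
  Nat.card (MulAction.orbitRel.Quotient
    (Subgroup.closure
      {g : Equiv.Perm (Fin k) | ∃ c : Fin (D + 1), c ≠ 0 ∧ g = (σ 0)⁻¹ * σ c}) (Fin k))

/-- Number of faces of the `D`-bubble (colors `1,…,D`) of `σ`:
`F_D(σ_D) = Σ_{1 ≤ c₁ < c₂ ≤ D} c(σ⁽ᶜ¹⁾ ∘ (σ⁽ᶜ²⁾)⁻¹)`. -/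
noncomputable def bubbleFaceCount {k D : ℕ} (σ : Fin (D + 1) → Equiv.Perm (Fin k)) : ℕ :=
  ∑ p ∈ Finset.univ.filter
      (fun p : Fin (D + 1) × Fin (D + 1) => 0 < p.1 ∧ p.1 < p.2),
    cycleCount (σ p.1 * (σ p.2)⁻¹)

/-- Number of connected components of the `D`-bubble of `σ`: the number of orbits
on `Fin k` of the subgroup generated by `(σ⁽¹⁾)⁻¹ ∘ σ⁽ᶜ⁾`, `2 ≤ c ≤ D`. -/
noncomputable def bubbleCompCount {k D : ℕ} (σ : Fin (D + 1) → Equiv.Perm (Fin k)) : ℕ :=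
  Nat.card (MulAction.orbitRel.Quotient
    (Subgroup.closure
      {g : Equiv.Perm (Fin k) | ∃ c : Fin (D + 1), 1 < c ∧ g = (σ 1)⁻¹ * σ c}) (Fin k))

/-!
The functions constant on the classes of an equivalence relation `r` on a finite type form a
vector space whose dimension is the number of classes of `r`, and passing from `r`, `s` to
`r ⊔ s` intersects these spaces. Subadditivity of codimension then says that `#X` minus the number
of classes is subadditive under joins of equivalence relations on `X`.

The orbit relation of a group generated by several elements is the join of the orbit relations of
the generators. The connected components of a colored graph are the orbits of the permutations
`(σ 0)⁻¹ * σ c`, whose cycles correspond to the faces containing color `0`; hence these faces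
number at most `(D - 1) * k + compCount σ`, and every other face belongs to the bubble.
-/

section Setoid

variable {X : Type*}

/-- The subspace of `X → K` of functions constant on the classes of `r`, encoded as the functions
that factor through `Quotient r`. -/
def classConstantFunctions (K : Type*) [Semiring K] (r : Setoid X) : Submodule K (X → K) :=
  LinearMap.range (LinearMap.funLeft K K (Quotient.mk r))

theorem mem_classConstantFunctions {K : Type*} [Semiring K] {r : Setoid X} {f : X → K} :
    f ∈ classConstantFunctions K r ↔ r ≤ Setoid.ker f := by
  constructor
  · rintro ⟨φ, rfl⟩ x y hxy
    exact congrArg φ (Quotient.sound hxy)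
  · exact fun hf => ⟨Quotient.lift f fun _ _ hxy => hf hxy, rfl⟩

theorem classConstantFunctions_sup (K : Type*) [Semiring K] (r s : Setoid X) :
    classConstantFunctions K (r ⊔ s) = classConstantFunctions K r ⊓ classConstantFunctions K s := by
  ext f
  simp only [Submodule.mem_inf, mem_classConstantFunctions, sup_le_iff]

theorem finrank_classConstantFunctions (K : Type*) [Ring K] [StrongRankCondition K] [Finite X]
    (r : Setoid X) : Module.finrank K (classConstantFunctions K r) = Nat.card (Quotient r) := by
  have := Fintype.ofFinite (Quotient r)
  have hinj : Function.Injective (LinearMap.funLeft K K (Quotient.mk r)) :=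
    LinearMap.funLeft_injective_of_surjective K K _ Quotient.mk_surjective
  rw [classConstantFunctions, LinearMap.finrank_range_of_inj hinj,
    Module.finrank_fintype_fun_eq_card, Nat.card_eq_fintype_card]

theorem card_quotient_le_card_quotient_of_le [Finite X] {r s : Setoid X} (h : r ≤ s) :
    Nat.card (Quotient s) ≤ Nat.card (Quotient r) :=
  Nat.card_le_card_of_surjective (Setoid.map_of_le h)
    (Quotient.ind fun x => ⟨Quotient.mk r x, rfl⟩)

theorem card_quotient_add_card_quotient_le [Finite X] (r s : Setoid X) :
    Nat.card (Quotient r) + Nat.card (Quotient s) ≤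
      Nat.card X + Nat.card (Quotient (r ⊔ s)) := by
  have := Fintype.ofFinite X
  have hdim := Submodule.finrank_sup_add_finrank_inf_eq
    (classConstantFunctions ℚ r) (classConstantFunctions ℚ s)
  have hsup := Submodule.finrank_le (classConstantFunctions ℚ r ⊔ classConstantFunctions ℚ s)
  rw [Module.finrank_fintype_fun_eq_card, ← Nat.card_eq_fintype_card] at hsup
  rw [← classConstantFunctions_sup] at hdim
  simp only [finrank_classConstantFunctions] at hdim
  omega

theorem sum_card_quotient_add_card_le [Finite X] {ι : Type*} (s : Finset ι) (r : ι → Setoid X) :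
    ∑ i ∈ s, Nat.card (Quotient (r i)) + Nat.card X ≤
      s.card * Nat.card X + Nat.card (Quotient (s.sup r)) := by
  classical
  induction s using Finset.induction_on with
  | empty => simp [Nat.card_congr (Setoid.quotientBotEquiv (α := X))]
  | insert i s hi ih =>
    rw [Finset.sum_insert hi, Finset.card_insert_of_notMem hi, Finset.sup_insert, add_one_mul]
    have hjoin := card_quotient_add_card_quotient_le (r i) (s.sup r)
    omega

end Setoid

section Orbits

variable {G X ι : Type*} [Group G] [MulAction G X]

theorem orbitRel_le_iff {H : Subgroup G} {r : Setoid X} :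
    MulAction.orbitRel H X ≤ r ↔ ∀ g ∈ H, ∀ x, r (g • x) x := by
  constructor
  · exact fun h g hg x => h ⟨⟨g, hg⟩, rfl⟩
  · rintro h _ y ⟨g, rfl⟩
    exact h g g.2 y

theorem orbitRel_mono {H K : Subgroup G} (h : H ≤ K) :
    MulAction.orbitRel H X ≤ MulAction.orbitRel K X :=
  orbitRel_le_iff.2 fun g hg _ => ⟨⟨g, h hg⟩, rfl⟩

theorem orbitRel_iSup (H : ι → Subgroup G) :
    MulAction.orbitRel (⨆ i, H i : Subgroup G) X = ⨆ i, MulAction.orbitRel (H i) X := by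
  refine le_antisymm (orbitRel_le_iff.2 fun g hg => ?_)
    (iSup_le fun i => orbitRel_mono (le_iSup H i))
  set r := ⨆ i, MulAction.orbitRel (H i) X
  refine Subgroup.iSup_induction H (C := fun g => ∀ x, r (g • x) x) hg
    (fun i => orbitRel_le_iff.1 (le_iSup (fun i => MulAction.orbitRel (H i) X) i)) (fun x => ?_)
    fun g h hg hh x => ?_
  · simpa only [one_smul] using r.refl' x
  · simpa only [mul_smul] using r.trans' (hg (h • x)) (hh x)

theorem orbitRel_closure_range (g : ι → G) :
    MulAction.orbitRel (Subgroup.closure (Set.range g)) X =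
      ⨆ i, MulAction.orbitRel (Subgroup.zpowers (g i)) X := by
  have hgen : Subgroup.closure (Set.range g) = ⨆ i, Subgroup.zpowers (g i) := by
    simp only [Subgroup.zpowers_eq_closure, ← Subgroup.closure_iUnion,
      Set.iUnion_singleton_eq_range]
  rw [hgen, orbitRel_iSup]

theorem sum_card_orbits_zpowers_add_card_le [Fintype ι] [Finite X] (g : ι → G) :
    ∑ i, Nat.card (MulAction.orbitRel.Quotient (Subgroup.zpowers (g i)) X) + Nat.card X ≤
      Fintype.card ι * Nat.card X +
        Nat.card (MulAction.orbitRel.Quotient (Subgroup.closure (Set.range g)) X) := by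
  have h := sum_card_quotient_add_card_le Finset.univ
    fun i => MulAction.orbitRel (Subgroup.zpowers (g i)) X
  rwa [Finset.sup_univ_eq_iSup, ← orbitRel_closure_range] at h

theorem orbitRel_zpowers_iff_sameCycle {τ : Equiv.Perm X} {x y : X} :
    MulAction.orbitRel (Subgroup.zpowers τ) X x y ↔ τ.SameCycle y x := by
  simp [MulAction.orbitRel_apply, MulAction.mem_orbit_iff, Equiv.Perm.SameCycle,
    Subgroup.smul_def]

end Orbits

section CycleCount

variable {k : ℕ}

theorem cycleCount_inv (τ : Equiv.Perm (Fin k)) : cycleCount τ⁻¹ = cycleCount τ := by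
  rw [cycleCount, cycleCount, Subgroup.zpowers_inv]

theorem cycleCount_conj (ρ τ : Equiv.Perm (Fin k)) :
    cycleCount (ρ * τ * ρ⁻¹) = cycleCount τ :=
  Nat.card_congr <| Quotient.congr ρ⁻¹ fun x y => by
    rw [orbitRel_zpowers_iff_sameCycle, orbitRel_zpowers_iff_sameCycle,
      Equiv.Perm.sameCycle_conj]

theorem cycleCount_inv_mul (a b : Equiv.Perm (Fin k)) :
    cycleCount (a⁻¹ * b) = cycleCount (a * b⁻¹) := by
  rw [← cycleCount_inv, ← cycleCount_conj a]
  group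

end CycleCount

section ColoredGraph

variable {k D : ℕ} (σ : Fin (D + 1) → Equiv.Perm (Fin k))

theorem compCount_eq_card_orbits_closure_range :
    compCount σ = Nat.card (MulAction.orbitRel.Quotient
      (Subgroup.closure (Set.range fun c : Fin D => (σ 0)⁻¹ * σ c.succ)) (Fin k)) := by
  have hgen : {g | ∃ c : Fin (D + 1), c ≠ 0 ∧ g = (σ 0)⁻¹ * σ c} =
      Set.range fun c : Fin D => (σ 0)⁻¹ * σ c.succ := by
    ext g
    simp [Fin.exists_fin_succ, eq_comm]
  rw [compCount, hgen]

theorem compCount_le_bubbleCompCount : compCount σ ≤ bubbleCompCount σ := by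
  refine card_quotient_le_card_quotient_of_le (orbitRel_mono ((Subgroup.closure_le _).2 ?_))
  rintro _ ⟨c, -, rfl⟩
  set H := Subgroup.closure {g | ∃ c : Fin (D + 1), c ≠ 0 ∧ g = (σ 0)⁻¹ * σ c}
  have hmem (c : Fin (D + 1)) : (σ 0)⁻¹ * σ c ∈ H := by
    obtain rfl | hc := eq_or_ne c 0
    · simp
    · exact Subgroup.subset_closure ⟨c, hc, rfl⟩
  have hquot : (σ 1)⁻¹ * σ c = ((σ 0)⁻¹ * σ 1)⁻¹ * ((σ 0)⁻¹ * σ c) := by group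
  exact hquot ▸ H.mul_mem (H.inv_mem (hmem 1)) (hmem c)

theorem compCount_pos (hk : 0 < k) : 0 < compCount σ :=
  Nat.card_pos_iff.2 ⟨⟨Quotient.mk _ ⟨0, hk⟩⟩, inferInstance⟩

theorem faceCount_eq_bubbleFaceCount_add :
    faceCount σ = bubbleFaceCount σ + ∑ c : Fin D, cycleCount (σ 0 * (σ c.succ)⁻¹) := by
  simp [faceCount, bubbleFaceCount, Finset.sum_filter, Fintype.sum_prod_type, Fin.sum_univ_succ,
    add_comm]

theorem sum_cycleCount_zero_add_le :
    ∑ c : Fin D, cycleCount (σ 0 * (σ c.succ)⁻¹) + k ≤ D * k + compCount σ := by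
  have h := sum_card_orbits_zpowers_add_card_le (X := Fin k)
    fun c : Fin D => (σ 0)⁻¹ * σ c.succ
  rw [← compCount_eq_card_orbits_closure_range, Nat.card_fin, Fintype.card_fin] at h
  simp only [← cycleCount_inv_mul]
  exact h

theorem quenched_exponent_bound_general :
    compCount σ ≤ bubbleCompCount σ ∧
      -(D - 1 : ℤ) * k + (faceCount σ : ℤ) - (bubbleFaceCount σ : ℤ) ≤ compCount σ := by
  refine ⟨compCount_le_bubbleCompCount σ, ?_⟩
  have hfaces := sum_cycleCount_zero_add_le σ
  rw [faceCount_eq_bubbleFaceCount_add]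
  zify at hfaces
  push_cast
  linarith

end ColoredGraph

/-- Quenched terms scale at most like `N`: if the `D`-bubble of `σ` is connected,
then the whole graph is connected and the `N`-exponent satisfies
`−(D−1)·k + F(σ) − F_D(σ_D) ≤ 1`. -/
theorem quenched_exponent_bound (k D : ℕ) (hk : 1 ≤ k) (hD : 2 ≤ D)
    (σ : Fin (D + 1) → Equiv.Perm (Fin k)) (hbub : bubbleCompCount σ = 1) :
    compCount σ = 1 ∧
      -(D - 1 : ℤ) * k + (faceCount σ : ℤ) - (bubbleFaceCount σ : ℤ) ≤ 1 := by
  obtain ⟨hcomp, hexp⟩ := quenched_exponent_bound_general σ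
  have hconn : compCount σ = 1 := le_antisymm (hcomp.trans_eq hbub) (compCount_pos σ hk)
  exact ⟨hconn, hexp.trans_eq (congrArg Nat.cast hconn)⟩
end

section
/- Annealed terms with disconnected bubbles are suppressed (key step of quenched = annealed at leading order): for D ≥ 2 and any (D+1)-tuple σ of permutations of {1,…,k} such that the whole (D+1)-colored graph is connected, C(σ) = 1, but the D-bubble is disconnected, C_D(σ_D) ≥ 2, the N-exponent satisfies −(D−1)·k + F(σ) − F_D(σ_D) ≤ 2 − D; that is, such terms are suppressed by at least N^{−(D−1)} relative to the leading scaling N. -/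
/-!
For a set `C` of colors, let `E(C)` be the space of functions on the black vertices that are
constant on the components of the subgraph with colors in `C`; its dimension is the number of these
components, hence a number of faces when `C` has two colors. Since `E(C ∪ C') = E(C) ∩ E(C')` for
overlapping `C` and `C'`, the dimension of `E` is submodular on overlapping sets, and
rank-nullity gives the nonnegativity of the genus of a three-colored graph on `k` white vertices:
`dim E(a, b) + dim E(b, c) + dim E(a, c) ≤ k + 2 dim E(a, b, c)`. Adding the colors of the bubble
one at a time, these two facts bound the number of faces through color `0` by
`(D - 1)(k - C_D) + D C`.
-/

open Module

section LinearMap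

variable {K V W : Type*} [Field K] [AddCommGroup V] [Module K V] [AddCommGroup W] [Module K W]
  [FiniteDimensional K V]

lemma finrank_ker_sub_le (X Y : V →ₗ[K] W) :
    finrank K (LinearMap.ker (X - Y)) ≤
      finrank K ↥(LinearMap.range X ⊓ LinearMap.range Y) +
        finrank K ↥(LinearMap.ker X ⊓ LinearMap.ker Y) := by
  set N := LinearMap.ker (X - Y)
  have hXY {v : V} (hv : v ∈ N) : X v = Y v := by simpa [N, sub_eq_zero] using hv
  have hrange : LinearMap.range (X.domRestrict N) ≤ LinearMap.range X ⊓ LinearMap.range Y := by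
    rintro _ ⟨v, rfl⟩
    exact ⟨⟨v, rfl⟩, ⟨v, (hXY v.2).symm⟩⟩
  have hker : (LinearMap.ker (X.domRestrict N)).map N.subtype ≤
      LinearMap.ker X ⊓ LinearMap.ker Y := by
    rintro _ ⟨v, hv, rfl⟩
    exact ⟨hv, (hXY v.2).symm.trans hv⟩
  rw [← LinearMap.finrank_range_add_finrank_ker (X.domRestrict N),
    ← Submodule.finrank_map_subtype_eq N]
  exact add_le_add (Submodule.finrank_mono hrange) (Submodule.finrank_mono hker)

lemma finrank_ker_add_finrank_ker_add_finrank_ker_sub_le (X Y : V →ₗ[K] W) :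
    finrank K (LinearMap.ker X) + finrank K (LinearMap.ker Y) + finrank K (LinearMap.ker (X - Y)) +
        finrank K ↥(LinearMap.range X ⊔ LinearMap.range Y) ≤
      2 * finrank K V + finrank K ↥(LinearMap.ker X ⊓ LinearMap.ker Y) := by
  have hX := X.finrank_range_add_finrank_ker
  have hY := Y.finrank_range_add_finrank_ker
  have hsup := Submodule.finrank_sup_add_finrank_inf_eq (LinearMap.range X) (LinearMap.range Y)
  have hsub := finrank_ker_sub_le X Y
  omega

end LinearMap

section FixedFunctions

variable {α : Type*} (K : Type*) [Semiring K]

/-- The space of `K`-valued functions on `α` that are invariant under every permutation in `T`. -/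
def fixedFunctions (T : Set (Equiv.Perm α)) : Submodule K (α → K) where
  carrier := {f | ∀ g ∈ T, f ∘ g = f}
  add_mem' hf hf' g hg := congrArg₂ (· + ·) (hf g hg) (hf' g hg)
  zero_mem' _ _ := rfl
  smul_mem' r _ hf g hg := congrArg (r • ·) (hf g hg)

variable {K}

lemma mem_fixedFunctions {T : Set (Equiv.Perm α)} {f : α → K} :
    f ∈ fixedFunctions K T ↔ ∀ g ∈ T, f ∘ g = f :=
  Iff.rfl

lemma fixedFunctions_closure (T : Set (Equiv.Perm α)) :
    fixedFunctions K (Subgroup.closure T : Set (Equiv.Perm α)) = fixedFunctions K T := by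
  refine le_antisymm (fun f hf g hg => hf g (Subgroup.subset_closure hg)) fun f hf g hg => ?_
  induction hg using Subgroup.closure_induction with
  | mem g hg => exact hf g hg
  | one => rfl
  | mul g h _ _ hg hh => rw [Equiv.Perm.coe_mul, ← Function.comp_assoc, hg, hh]
  | inv g _ hg =>
    nth_rw 1 [← hg]
    rw [Function.comp_assoc, ← Equiv.Perm.coe_mul, mul_inv_cancel, Equiv.Perm.coe_one,
      Function.comp_id]

lemma fixedFunctions_subgroup_eq_range (H : Subgroup (Equiv.Perm α)) :
    fixedFunctions K (H : Set (Equiv.Perm α)) =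
      LinearMap.range (LinearMap.funLeft K K
        (Quotient.mk _ : α → MulAction.orbitRel.Quotient H α)) := by
  ext f
  constructor
  · intro hf
    refine ⟨Quotient.lift f ?_, rfl⟩
    rintro _ i ⟨g, rfl⟩
    exact congrFun (hf g g.2) i
  · rintro ⟨f, rfl⟩ g hg
    ext i
    exact congrArg f (Quotient.sound ⟨⟨g, hg⟩, rfl⟩)

lemma finrank_fixedFunctions [StrongRankCondition K] [Finite α] (T : Set (Equiv.Perm α)) :
    finrank K (fixedFunctions K T) =
      Nat.card (MulAction.orbitRel.Quotient (Subgroup.closure T) α) := by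
  have := Fintype.ofFinite (MulAction.orbitRel.Quotient (Subgroup.closure T) α)
  rw [← fixedFunctions_closure, fixedFunctions_subgroup_eq_range,
    LinearMap.finrank_range_of_inj
      (LinearMap.funLeft_injective_of_surjective K K _ Quotient.mk_surjective),
    finrank_fintype_fun_eq_card, Nat.card_eq_fintype_card]

lemma cycleCount_eq_finrank [StrongRankCondition K] {k : ℕ} (τ : Equiv.Perm (Fin k)) :
    cycleCount τ = finrank K (fixedFunctions K {τ}) := by
  rw [cycleCount, Subgroup.zpowers_eq_closure, finrank_fixedFunctions]

end FixedFunctions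

section ComponentFunctions

variable {α ι : Type*} (K : Type*) [Semiring K] (σ : ι → Equiv.Perm α)

/-- The space `E(C)` of functions on the black vertices of the colored graph `σ` that are constant
on the components of its subgraph with colors in `C`. A function on the black vertices qualifies
iff its pullbacks to the white vertices along all colors in `C` agree. -/
def componentFunctions (C : Set ι) : Submodule K (α → K) where
  carrier := {f | ∀ c ∈ C, ∀ d ∈ C, f ∘ σ c = f ∘ σ d}
  add_mem' hf hf' c hc d hd := congrArg₂ (· + ·) (hf c hc d hd) (hf' c hc d hd)
  zero_mem' _ _ _ _ := rfl
  smul_mem' r _ hf c hc d hd := congrArg (r • ·) (hf c hc d hd)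

variable {K σ}

lemma mem_componentFunctions_insert {c : ι} {C : Set ι} {f : α → K} :
    f ∈ componentFunctions K σ (insert c C) ↔ ∀ d ∈ C, f ∘ σ d = f ∘ σ c := by
  refine ⟨fun hf d hd => hf d (.inr hd) c (.inl rfl), fun hf => ?_⟩
  have hf' : ∀ d ∈ insert c C, f ∘ σ d = f ∘ σ c := by
    rintro d (rfl | hd)
    exacts [rfl, hf d hd]
  exact fun d hd e he => (hf' d hd).trans (hf' e he).symm

lemma mem_componentFunctions_pair {c d : ι} {f : α → K} :
    f ∈ componentFunctions K σ {c, d} ↔ f ∘ σ c = f ∘ σ d := by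
  simp [mem_componentFunctions_insert, eq_comm]

lemma componentFunctions_antitone : Antitone (componentFunctions K σ) :=
  fun _ _ h _ hf c hc d hd => hf c (h hc) d (h hd)

lemma componentFunctions_union {C C' : Set ι} (h : (C ∩ C').Nonempty) :
    componentFunctions K σ (C ∪ C') = componentFunctions K σ C ⊓ componentFunctions K σ C' := by
  obtain ⟨b, hb, hb'⟩ := h
  refine le_antisymm (le_inf (componentFunctions_antitone Set.subset_union_left)
    (componentFunctions_antitone Set.subset_union_right)) ?_
  rintro f ⟨hf, hf'⟩
  have hbase : ∀ c ∈ C ∪ C', f ∘ σ c = f ∘ σ b := by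
    rintro c (hc | hc)
    exacts [hf c hc b hb, hf' c hc b hb']
  exact fun c hc d hd => (hbase c hc).trans (hbase d hd).symm

lemma componentFunctions_pair_eq_fixedFunctions (c d : ι) :
    componentFunctions K σ {c, d} = fixedFunctions K {σ c * (σ d)⁻¹} := by
  ext f
  rw [mem_componentFunctions_pair, mem_fixedFunctions]
  simp only [Set.mem_singleton_iff, forall_eq, Equiv.Perm.coe_mul, ← Function.comp_assoc]
  exact ((σ d).comp_symm_eq f (f ∘ σ c)).symm

lemma comap_fixedFunctions_eq_componentFunctions (c : ι) (C : Set ι) :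
    (fixedFunctions K ((fun d => (σ c)⁻¹ * σ d) '' C)).comap
        (LinearEquiv.funCongrLeft K K (σ c)).toLinearMap =
      componentFunctions K σ (insert c C) := by
  ext f
  rw [mem_componentFunctions_insert, Submodule.mem_comap, mem_fixedFunctions, Set.forall_mem_image]
  refine forall₂_congr fun d _ => ?_
  have hpull : (f ∘ σ c) ∘ ((σ c)⁻¹ * σ d : Equiv.Perm α) = f ∘ σ d := by
    rw [Function.comp_assoc, ← Equiv.Perm.coe_mul, mul_inv_cancel_left]
  exact Eq.congr_left hpull

lemma finrank_componentFunctions_insert [StrongRankCondition K] [Finite α] (c : ι) (C : Set ι) :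
    finrank K (componentFunctions K σ (insert c C)) =
      Nat.card (MulAction.orbitRel.Quotient
        (Subgroup.closure ((fun d => (σ c)⁻¹ * σ d) '' C)) α) := by
  rw [← finrank_fixedFunctions (K := K), ← comap_fixedFunctions_eq_componentFunctions,
    Submodule.comap_equiv_eq_map_symm, LinearEquiv.finrank_map_eq]

variable (K)

lemma cycleCount_mul_inv_eq_finrank [StrongRankCondition K] {k : ℕ}
    (σ : ι → Equiv.Perm (Fin k)) (c d : ι) :
    cycleCount (σ c * (σ d)⁻¹) = finrank K (componentFunctions K σ {c, d}) := by
  rw [componentFunctions_pair_eq_fixedFunctions, cycleCount_eq_finrank (K := K)]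

end ComponentFunctions

section GenusBounds

variable {α ι : Type*}

open Matrix in
lemma comp_symm_mem_componentFunctions {R : Type*} [Ring R] {σ : ι → Equiv.Perm α}
    [Fintype α] (b : ι) {C : Set ι} {v : α → R}
    (hv : ∀ c ∈ C, ∀ f : α → R, v ⬝ᵥ (f ∘ σ c - f ∘ σ b) = 0) :
    v ∘ (σ b).symm ∈ componentFunctions R σ C := by
  have hpull : ∀ c ∈ C, (v ∘ (σ b).symm) ∘ σ c = v := by
    intro c hc
    refine dotProduct_eq _ _ fun u => ?_
    have hu : (u ∘ (σ c).symm) ∘ σ c = u := by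
      rw [Function.comp_assoc, Equiv.symm_comp_self, Function.comp_id]
    calc (v ∘ (σ b).symm) ∘ σ c ⬝ᵥ u
      _ = v ∘ (σ b).symm ⬝ᵥ u ∘ (σ c).symm := (dotProduct_comp_equiv_symm _ _ _).symm
      _ = v ⬝ᵥ (u ∘ (σ c).symm) ∘ σ b := comp_equiv_symm_dotProduct _ _ _
      _ = v ⬝ᵥ (u ∘ (σ c).symm) ∘ σ c :=
        (sub_eq_zero.1 ((dotProduct_sub _ _ _).symm.trans (hv c hc _))).symm
      _ = v ⬝ᵥ u := by rw [hu]
  exact fun c hc d hd => (hpull c hc).trans (hpull d hd).symm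

variable (K : Type*) [Field K] (σ : ι → Equiv.Perm α)

lemma finrank_componentFunctions_submodular [Finite α] {R C C' : Set ι} (hR : R.Nonempty)
    (hC : R ⊆ C) (hC' : R ⊆ C') :
    finrank K (componentFunctions K σ C) + finrank K (componentFunctions K σ C') ≤
      finrank K (componentFunctions K σ R) + finrank K (componentFunctions K σ (C ∪ C')) := by
  rw [componentFunctions_union (hR.mono (Set.subset_inter hC hC')),
    ← Submodule.finrank_sup_add_finrank_inf_eq]
  refine Nat.add_le_add_right (Submodule.finrank_mono ?_) _
  exact sup_le (componentFunctions_antitone hC) (componentFunctions_antitone hC')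

lemma card_le_finrank_add_finrank_componentFunctions [Fintype α] (b : ι) (C : Set ι)
    (W : Submodule K (α → K)) (hW : ∀ c ∈ C, ∀ f : α → K, f ∘ σ c - f ∘ σ b ∈ W) :
    Fintype.card α ≤ finrank K W + finrank K (componentFunctions K σ C) := by
  classical
  have hle : W.dualAnnihilator.comap (dotProductEquiv K α).toLinearMap ≤
      (componentFunctions K σ C).comap
        (LinearEquiv.funCongrLeft K K (σ b).symm).toLinearMap := fun v hv =>
    comp_symm_mem_componentFunctions b fun c hc f =>
      (Submodule.mem_dualAnnihilator _).1 hv _ (hW c hc f)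
  have hrank := Submodule.finrank_mono hle
  rw [Submodule.comap_equiv_eq_map_symm, Submodule.comap_equiv_eq_map_symm,
    LinearEquiv.finrank_map_eq, LinearEquiv.finrank_map_eq] at hrank
  rw [← finrank_fintype_fun_eq_card K, ← Subspace.finrank_add_finrank_dualAnnihilator_eq W]
  exact Nat.add_le_add_left hrank _

/-- Nonnegativity of the genus of the three-colored graph with colors `a`, `b` and `c`. -/
lemma finrank_componentFunctions_pairs_le [Fintype α] (a b c : ι) :
    finrank K (componentFunctions K σ {a, b}) + finrank K (componentFunctions K σ {b, c}) +
        finrank K (componentFunctions K σ {a, c}) ≤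
      Fintype.card α + 2 * finrank K (componentFunctions K σ {a, b, c}) := by
  let X := LinearMap.funLeft K K (σ a) - LinearMap.funLeft K K (σ c)
  let Y := LinearMap.funLeft K K (σ b) - LinearMap.funLeft K K (σ c)
  have hX : LinearMap.ker X = componentFunctions K σ {a, c} := by
    ext f
    exact sub_eq_zero.trans mem_componentFunctions_pair.symm
  have hY : LinearMap.ker Y = componentFunctions K σ {b, c} := by
    ext f
    exact sub_eq_zero.trans mem_componentFunctions_pair.symm
  have hXY : LinearMap.ker (X - Y) = componentFunctions K σ {a, b} := by
    ext f
    rw [sub_sub_sub_cancel_right]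
    exact sub_eq_zero.trans mem_componentFunctions_pair.symm
  have hinf : LinearMap.ker X ⊓ LinearMap.ker Y = componentFunctions K σ {a, b, c} := by
    rw [hX, hY, ← componentFunctions_union ⟨c, by simp⟩]
    congr 1
    grind
  have hcodim : Fintype.card α ≤ finrank K ↥(LinearMap.range X ⊔ LinearMap.range Y) +
      finrank K (componentFunctions K σ {a, b, c}) := by
    refine card_le_finrank_add_finrank_componentFunctions K σ c _ _ ?_
    rintro d (rfl | rfl | rfl) f
    · exact Submodule.mem_sup_left ⟨f, rfl⟩
    · exact Submodule.mem_sup_right ⟨f, rfl⟩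
    · simp
  have hker := finrank_ker_add_finrank_ker_add_finrank_ker_sub_le X Y
  rw [hinf, hX, hY, hXY, finrank_fintype_fun_eq_card] at hker
  omega

-- The case `C = {j}` is the genus inequality; submodularity extends it to larger `C`.
lemma finrank_componentFunctions_insert_add_le [Fintype α] (a c : ι) {j : ι} {C : Set ι}
    (hj : j ∈ C) :
    finrank K (componentFunctions K σ {a, c}) + finrank K (componentFunctions K σ (insert c C)) +
        finrank K (componentFunctions K σ (insert a C)) ≤
      Fintype.card α + 2 * finrank K (componentFunctions K σ (insert a (insert c C))) := by
  have hgenus := finrank_componentFunctions_pairs_le K σ a j c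
  have hc := finrank_componentFunctions_submodular K σ (R := {j, c}) (C := insert c C)
    (C' := {a, j, c}) (by simp) (by grind) (by grind)
  have ha := finrank_componentFunctions_submodular K σ (R := {a, j}) (C := insert a C)
    (C' := {a, j, c}) (by simp) (by grind) (by grind)
  rw [show insert c C ∪ {a, j, c} = insert a (insert c C) by grind] at hc
  rw [show insert a C ∪ {a, j, c} = insert a (insert c C) by grind] at ha
  omega

lemma sum_finrank_componentFunctions_pair_le [Fintype α] (a j : ι) (s : Finset ι) :
    finrank K (componentFunctions K σ {a, j}) + ∑ c ∈ s, finrank K (componentFunctions K σ {a, c}) +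
        s.card * finrank K (componentFunctions K σ (insert j s)) ≤
      s.card * Fintype.card α +
        (s.card + 1) * finrank K (componentFunctions K σ (insert a (insert j s))) := by
  classical
  induction s using Finset.induction_on with
  | empty =>
    rw [Finset.coe_empty, insert_empty_eq]
    simp
  | insert c s hc ih =>
    rw [Finset.sum_insert hc, Finset.card_insert_of_notMem hc, Finset.coe_insert,
      Set.insert_comm j c]
    set C : Set ι := insert j s
    have hadd := finrank_componentFunctions_insert_add_le K σ a c
      (Set.mem_insert j (s : Set ι))
    have hsub := finrank_componentFunctions_submodular K σ (R := C) (C := insert a C)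
      (C' := insert c C) (Set.insert_nonempty _ _) (Set.subset_insert _ _) (Set.subset_insert _ _)
    rw [show insert a C ∪ insert c C = insert a (insert c C) by grind] at hsub
    have hmul := Nat.mul_le_mul_left s.card hsub
    linarith

end GenusBounds

section ColoredGraph

variable (K : Type*) [Semiring K] [StrongRankCondition K] {k D : ℕ}
  (σ : Fin (D + 1) → Equiv.Perm (Fin k))

lemma faceCount_eq_bubbleFaceCount_add_sum :
    faceCount σ = bubbleFaceCount σ + ∑ c ∈ Finset.Ioi 0, cycleCount (σ 0 * (σ c)⁻¹) := by
  have hface : faceCount σ =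
      ∑ c, ∑ d ∈ Finset.Ioi c, cycleCount (σ c * (σ d)⁻¹) :=
    Finset.sum_finset_product _ _ _ (by simp)
  have hbubble : bubbleFaceCount σ =
      ∑ c ∈ Finset.Ioi 0, ∑ d ∈ Finset.Ioi c, cycleCount (σ c * (σ d)⁻¹) :=
    Finset.sum_finset_product _ _ _ fun _ => by
      simp only [Finset.mem_filter_univ, Finset.mem_Ioi]
  have huniv : (Finset.univ : Finset (Fin (D + 1))) = insert 0 (Finset.Ioi 0) := by
    ext c
    simpa [Fin.pos_iff_ne_zero] using em (c = 0)
  rw [hface, hbubble, huniv, Finset.sum_insert (by simp), add_comm]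

lemma compCount_eq_finrank :
    compCount σ = finrank K (componentFunctions K σ (insert 0 (Set.Ioi 0))) := by
  have hgen : {g | ∃ c, c ≠ 0 ∧ g = (σ 0)⁻¹ * σ c} = (fun c => (σ 0)⁻¹ * σ c) '' Set.Ioi 0 := by
    ext g
    simp [Fin.pos_iff_ne_zero, eq_comm]
  rw [finrank_componentFunctions_insert, compCount, hgen]

lemma bubbleCompCount_eq_finrank :
    bubbleCompCount σ = finrank K (componentFunctions K σ (insert 1 (Set.Ioi 1))) := by
  have hgen : {g | ∃ c, 1 < c ∧ g = (σ 1)⁻¹ * σ c} = (fun c => (σ 1)⁻¹ * σ c) '' Set.Ioi 1 := by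
    ext g
    simp [eq_comm]
  rw [finrank_componentFunctions_insert, bubbleCompCount, hgen]

lemma Ioi_zero_eq_insert_one (n : ℕ) :
    (Finset.Ioi 0 : Finset (Fin (n + 2))) = insert 1 (Finset.Ioi 1) := by
  ext c
  rw [Finset.Ioi_insert, Finset.mem_Ioi, Finset.mem_Ici]
  exact ⟨fun h => Fin.one_le_of_ne_zero h.ne', Fin.zero_lt_one.trans_le⟩

lemma sum_cycleCount_zero_le {n : ℕ} (σ : Fin (n + 2) → Equiv.Perm (Fin k)) :
    ∑ c ∈ Finset.Ioi 0, cycleCount (σ 0 * (σ c)⁻¹) + n * bubbleCompCount σ ≤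
      n * k + (n + 1) * compCount σ := by
  have hcard : (Finset.Ioi 1 : Finset (Fin (n + 2))).card = n := by simp
  have hcolors : insert 1 (Set.Ioi 1) = (Set.Ioi 0 : Set (Fin (n + 2))) := by
    rw [← Finset.coe_Ioi, ← Finset.coe_insert, ← Ioi_zero_eq_insert_one, Finset.coe_Ioi]
  have hfaces := sum_finrank_componentFunctions_pair_le ℚ σ 0 1 (Finset.Ioi 1)
  rw [hcard, Fintype.card_fin, Finset.coe_Ioi, ← bubbleCompCount_eq_finrank, hcolors,
    ← compCount_eq_finrank] at hfaces
  rw [Ioi_zero_eq_insert_one, Finset.sum_insert (by simp)]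
  simpa only [cycleCount_mul_inv_eq_finrank ℚ] using hfaces

end ColoredGraph

theorem annealed_suppression_general (k D : ℕ) (hD : 1 ≤ D)
    (σ : Fin (D + 1) → Equiv.Perm (Fin k)) :
    -(D - 1 : ℤ) * k + (faceCount σ : ℤ) - (bubbleFaceCount σ : ℤ) ≤
      D * compCount σ - (D - 1) * bubbleCompCount σ := by
  obtain ⟨n, rfl⟩ := Nat.exists_eq_add_of_le' hD
  have hfaces := faceCount_eq_bubbleFaceCount_add_sum σ
  have hsum := sum_cycleCount_zero_le σ
  zify at hfaces hsum
  push_cast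
  linarith

/-- Annealed terms with disconnected bubbles are suppressed: if the `(D+1)`-colored graph
is connected but its `D`-bubble is disconnected, the `N`-exponent satisfies
`−(D−1)·k + F(σ) − F_D(σ_D) ≤ 2 − D`, i.e. such terms are suppressed by at least
`N^{−(D−1)}` relative to the leading scaling `N`. -/
theorem annealed_suppression (k D : ℕ) (hk : 1 ≤ k) (hD : 2 ≤ D)
    (σ : Fin (D + 1) → Equiv.Perm (Fin k)) (hconn : compCount σ = 1)
    (hdisc : 2 ≤ bubbleCompCount σ) :
    -(D - 1 : ℤ) * k + (faceCount σ : ℤ) - (bubbleFaceCount σ : ℤ) ≤ 2 - D := by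
  have h := annealed_suppression_general k D (by omega) σ
  rw [hconn] at h
  have hmul : (D - 1 : ℤ) * 2 ≤ (D - 1) * bubbleCompCount σ :=
    mul_le_mul_of_nonneg_left (mod_cast hdisc) (by omega)
  push_cast at h
  linarith
end

section
/- Counting the leading-order graphs for D = 2: let k ≥ 1 and let γ = (1 2 … k) be the standard k-cycle in S_k. Then the number of permutations σ ∈ S_k satisfying c(σ) + c(σ ∘ γ⁻¹) = k + 1 (the planarity/genus-zero condition for the associated 3-colored graph with a single face of colors 1 and 2) equals (1/(2k+1))·binomial(2k+1, k), i.e. the k-th Catalan number. -/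
/-!
The functions invariant under a permutation form a vector space whose dimension is the number of
cycles. A function invariant under `σ` and `σ * γ⁻¹` is invariant under `γ`, so the dimension
formula gives `c(σ) + c(σ * γ⁻¹) ≤ k + c(γ)`; when equality holds, every `γ`-invariant function is
`σ`-invariant. Call such a `σ` geodesic below `γ`.

Classify the geodesics `σ` below the `(n + 1)`-cycle `γ` by the value `σ 0 = γ j`. Multiplying `σ`
and `γ` on the left by the transposition of `0` and `γ j` (which is trivial for `j = n`) splits one
cycle off each of them. The cycle `γ` becomes a disjoint union of a `(j + 1)`-cycle and an
`(n - j)`-cycle, `σ` preserves both parts, and it now fixes `0`. The Kreweras complement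
`σ ↦ γ * σ⁻¹` exchanges the geodesics fixing `0` with those satisfying `σ 0 = γ 0`, which by the
same splitting correspond to the geodesics below a cycle of length one less. The result is the
Catalan recurrence.
-/

open Equiv

variable {α β : Type*}

section NumCycles

/-- The number of cycles of a permutation of an arbitrary type, counting fixed points. On `Fin k`
this is `cycleCount`; other types are needed because cutting a cycle leads to permutations of a
disjoint union. -/
noncomputable def numCycles (τ : Perm α) : ℕ :=
  Nat.card (MulAction.orbitRel.Quotient (Subgroup.zpowers τ) α)

theorem orbitRel_zpowers_iff_sameCycle_s15 {τ : Perm α} {a b : α} :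
    MulAction.orbitRel (Subgroup.zpowers τ) α a b ↔ τ.SameCycle b a := by
  simp [MulAction.orbitRel_apply, MulAction.mem_orbit_iff, Perm.SameCycle, Subgroup.exists_zpowers,
    Subgroup.smul_def]

theorem numCycles_inv (τ : Perm α) : numCycles τ⁻¹ = numCycles τ := by
  rw [numCycles, numCycles, Subgroup.zpowers_inv]

theorem sameCycle_permCongr (e : α ≃ β) (τ : Perm α) (a b : α) :
    (e.permCongr τ).SameCycle (e a) (e b) ↔ τ.SameCycle a b := by
  refine exists_congr fun i => ?_
  rw [← Equiv.permCongrHom_coe, ← map_zpow]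
  simp

theorem numCycles_permCongr (e : α ≃ β) (τ : Perm α) :
    numCycles (e.permCongr τ) = numCycles τ := by
  refine (Nat.card_congr (Quotient.congr e fun a b => ?_)).symm
  exact orbitRel_zpowers_iff_sameCycle_s15.trans
    ((sameCycle_permCongr e τ b a).symm.trans orbitRel_zpowers_iff_sameCycle_s15.symm)

theorem numCycles_conj (s τ : Perm α) : numCycles (s * τ * s⁻¹) = numCycles τ :=
  numCycles_permCongr s τ

theorem numCycles_eq_one [Nonempty α] {τ : Perm α} (h : ∀ a b, τ.SameCycle a b) :
    numCycles τ = 1 := by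
  refine Nat.card_eq_one_iff_unique.2 ⟨⟨?_⟩, ‹Nonempty α›.map (Quotient.mk _)⟩
  rintro ⟨a⟩ ⟨b⟩
  exact Quotient.sound (orbitRel_zpowers_iff_sameCycle_s15.2 (h b a))

end NumCycles

section InvariantFunctions

/-- The space of rational-valued functions that are constant on the cycles of `τ`. Any field of
coefficients would do. -/
def invariantFunctions (τ : Perm α) : Submodule ℚ (α → ℚ) where
  carrier := {f | ∀ a, f (τ a) = f a}
  add_mem' hf hg a := by simp [hf a, hg a]
  zero_mem' _ := rfl
  smul_mem' c f hf a := by simp [hf a]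

theorem apply_eq_of_sameCycle {τ : Perm α} {f : α → ℚ} (hf : f ∈ invariantFunctions τ) {a b : α}
    (h : τ.SameCycle a b) : f a = f b := by
  obtain ⟨i, rfl⟩ := h
  induction i with
  | zero => rfl
  | succ i ih => rw [ih, add_comm, zpow_add, zpow_one, Perm.mul_apply, hf]
  | pred i ih => rw [ih, ← hf ((τ ^ (-(i : ℤ) - 1)) a), ← Perm.mul_apply, ← zpow_one_add,
      add_sub_cancel]

theorem range_funLeft_mk_orbitRel (τ : Perm α) :
    LinearMap.range (LinearMap.funLeft ℚ ℚ
      (Quotient.mk (MulAction.orbitRel (Subgroup.zpowers τ) α))) = invariantFunctions τ := by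
  ext f
  constructor
  · rintro ⟨g, rfl⟩ a
    exact congrArg g (Quotient.sound (orbitRel_zpowers_iff_sameCycle_s15.2
      (Perm.sameCycle_apply_right.2 .rfl)))
  · intro hf
    exact ⟨Quotient.lift f fun a b hab =>
      (apply_eq_of_sameCycle hf (orbitRel_zpowers_iff_sameCycle_s15.1 hab)).symm, rfl⟩

theorem finrank_invariantFunctions [Finite α] (τ : Perm α) :
    Module.finrank ℚ (invariantFunctions τ) = numCycles τ := by
  have := Fintype.ofFinite (MulAction.orbitRel.Quotient (Subgroup.zpowers τ) α)
  rw [← range_funLeft_mk_orbitRel, LinearMap.finrank_range_of_inj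
    (LinearMap.funLeft_injective_of_surjective ℚ ℚ _ Quotient.mk_surjective),
    Module.finrank_fintype_fun_eq_card, numCycles, Nat.card_eq_fintype_card]

theorem indicator_one_mem_invariantFunctions_iff [Finite α] {τ : Perm α} {S : Set α} :
    S.indicator 1 ∈ invariantFunctions τ ↔ Set.MapsTo τ S S := by
  classical
  constructor
  · intro h a ha
    have := h a
    simpa [Set.indicator_apply, ha] using this
  · intro h a
    have hS : τ a ∈ S ↔ a ∈ S :=
      ⟨fun ha => by simpa using Perm.perm_symm_mapsTo_of_mapsTo τ h ha, fun ha => h ha⟩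
    simp only [Set.indicator_apply, hS, Pi.one_apply]

theorem numCycles_one [Finite α] : numCycles (1 : Perm α) = Nat.card α := by
  have := Fintype.ofFinite α
  have htop : invariantFunctions (1 : Perm α) = ⊤ := eq_top_iff.2 fun _ _ _ => rfl
  rw [← finrank_invariantFunctions, htop, finrank_top, Module.finrank_fintype_fun_eq_card,
    Nat.card_eq_fintype_card]

/-- A function invariant under a permutation of a disjoint union is a pair of invariant
functions. -/
def invariantFunctionsSumCongr (σ : Perm α) (τ : Perm β) :
    invariantFunctions (Perm.sumCongr σ τ) ≃ₗ[ℚ] invariantFunctions σ × invariantFunctions τ where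
  toFun f := (⟨fun a => f.1 (Sum.inl a), fun a => f.2 (Sum.inl a)⟩,
    ⟨fun b => f.1 (Sum.inr b), fun b => f.2 (Sum.inr b)⟩)
  invFun p := ⟨Sum.elim p.1.1 p.2.1, Sum.rec p.1.2 p.2.2⟩
  map_add' _ _ := rfl
  map_smul' _ _ := rfl
  left_inv f := Subtype.ext (Sum.elim_comp_inl_inr f.1)
  right_inv _ := rfl

theorem numCycles_sumCongr [Finite α] [Finite β] (σ : Perm α) (τ : Perm β) :
    numCycles (Perm.sumCongr σ τ) = numCycles σ + numCycles τ := by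
  simp only [← finrank_invariantFunctions, ← Module.finrank_prod,
    (invariantFunctionsSumCongr σ τ).finrank_eq]

theorem numCycles_add_numCycles_le [Finite α] (σ τ : Perm α) :
    numCycles σ + numCycles τ ≤ Nat.card α +
      Module.finrank ℚ (invariantFunctions σ ⊓ invariantFunctions τ : Submodule ℚ (α → ℚ)) := by
  have := Fintype.ofFinite α
  rw [← finrank_invariantFunctions, ← finrank_invariantFunctions,
    ← Submodule.finrank_sup_add_finrank_inf_eq, Nat.card_eq_fintype_card,
    ← Module.finrank_fintype_fun_eq_card ℚ]
  gcongr
  exact Submodule.finrank_le _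

end InvariantFunctions

section SwapMul

variable [DecidableEq α] {τ : Perm α} {x y : α}

theorem mem_invariantFunctions_swap_mul_iff {f : α → ℚ} (h : f x = f y) :
    f ∈ invariantFunctions (swap x y * τ) ↔ f ∈ invariantFunctions τ := by
  have hswap : ∀ a, f (swap x y a) = f a := by
    intro a
    rw [swap_apply_def]
    split_ifs with hx hy
    · rw [hx, h]
    · rw [hy, h]
    · rfl
  exact forall_congr' fun a => by rw [Perm.mul_apply, hswap]

theorem invariantFunctions_le_swap_mul (h : τ.SameCycle x y) :
    invariantFunctions τ ≤ invariantFunctions (swap x y * τ) := fun _ hf =>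
  (mem_invariantFunctions_swap_mul_iff (apply_eq_of_sameCycle hf h)).2 hf

variable [Finite α]

/-- The arc of the cycle of `τ` from `x` up to but excluding `y` is a cycle of `swap x y * τ`. -/
theorem exists_mapsTo_swap_mul (h : τ.SameCycle x y) (hxy : x ≠ y) :
    ∃ S : Set α, Set.MapsTo (swap x y * τ) S S ∧ x ∈ S ∧ y ∉ S := by
  have hex := h.exists_nat_pow_eq
  set m := Nat.find hex
  have hm : (τ ^ m) x = y := Nat.find_spec hex
  have hmin : ∀ l < m, (τ ^ l) x ≠ y := fun l hl => Nat.find_min hex hl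
  have hpos : 0 < m := Nat.pos_of_ne_zero fun h0 => hxy (by simpa [h0] using hm)
  have hne : ∀ l < m, 0 < l → (τ ^ l) x ≠ x := by
    intro l hl hl0 hfix
    refine hmin (m - l) (by omega) ?_
    rw [← hm, ← Nat.sub_add_cancel hl.le, pow_add, Perm.mul_apply, hfix, Nat.add_sub_cancel]
  refine ⟨{a | ∃ l < m, (τ ^ l) x = a}, ?_, ⟨0, hpos, rfl⟩, fun ⟨l, hl, hy⟩ => hmin l hl hy⟩
  rintro _ ⟨l, hl, rfl⟩
  have hstep : (swap x y * τ) ((τ ^ l) x) = swap x y ((τ ^ (l + 1)) x) := by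
    rw [Perm.mul_apply, pow_succ', Perm.mul_apply]
  rw [hstep]
  rcases (Nat.succ_le_of_lt hl).eq_or_lt with hlast | hlt
  · exact ⟨0, hpos, by simp [← Nat.succ_eq_add_one, hlast, hm]⟩
  · exact ⟨l + 1, hlt, (swap_apply_of_ne_of_ne (hne _ hlt l.succ_pos) (hmin _ hlt)).symm⟩

theorem numCycles_swap_mul (h : τ.SameCycle x y) (hxy : x ≠ y) :
    numCycles (swap x y * τ) = numCycles τ + 1 := by
  let φ : Module.Dual ℚ (invariantFunctions (swap x y * τ)) :=
    (LinearMap.proj (R := ℚ) (φ := fun _ : α => ℚ) x - LinearMap.proj y).domRestrict _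
  have hφ : φ ≠ 0 := by
    obtain ⟨S, hS, hx, hy⟩ := exists_mapsTo_swap_mul h hxy
    intro h0
    have := LinearMap.congr_fun h0 ⟨_, indicator_one_mem_invariantFunctions_iff.2 hS⟩
    simp [φ, hx, hy] at this
  have hker : LinearMap.ker φ =
      (invariantFunctions τ).comap (invariantFunctions (swap x y * τ)).subtype := by
    ext ⟨f, hf⟩
    have hiff : f x = f y ↔ f ∈ invariantFunctions τ :=
      ⟨fun hfxy => (mem_invariantFunctions_swap_mul_iff hfxy).1 hf,
        fun hf' => apply_eq_of_sameCycle hf' h⟩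
    simpa [φ, sub_eq_zero] using hiff
  rw [← finrank_invariantFunctions, ← Module.Dual.finrank_ker_add_one_of_ne_zero hφ, hker,
    (Submodule.comapSubtypeEquivOfLe (invariantFunctions_le_swap_mul h)).finrank_eq,
    finrank_invariantFunctions]

end SwapMul

section IsGeodesic

/-- The permutation `σ` lies on a geodesic from `1` to `γ` in the Cayley graph of `Perm α` generated
by transpositions, in which `1` and `τ` are at distance `Nat.card α - numCycles τ`. -/
def IsGeodesic (γ σ : Perm α) : Prop :=
  numCycles σ + numCycles (σ * γ⁻¹) = Nat.card α + numCycles γ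

theorem isGeodesic_self [Finite α] (γ : Perm α) : IsGeodesic γ γ := by
  rw [IsGeodesic, mul_inv_cancel, numCycles_one, add_comm]

theorem isGeodesic_permCongr_iff (e : α ≃ β) (γ σ : Perm α) :
    IsGeodesic (e.permCongr γ) (e.permCongr σ) ↔ IsGeodesic γ σ := by
  have h : e.permCongr σ * (e.permCongr γ)⁻¹ = e.permCongr (σ * γ⁻¹) := by
    simp only [← Equiv.permCongrHom_coe, map_mul, map_inv]
  simp only [IsGeodesic, h, numCycles_permCongr, Nat.card_congr e]

theorem isGeodesic_mul_inv_iff (γ σ : Perm α) : IsGeodesic γ (γ * σ⁻¹) ↔ IsGeodesic γ σ := by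
  rw [IsGeodesic, IsGeodesic, numCycles_conj, numCycles_inv, ← numCycles_inv (γ * σ⁻¹), mul_inv_rev,
    inv_inv, add_comm]

theorem isGeodesic_swap_mul_iff [Finite α] [DecidableEq α] {γ σ : Perm α} {x y : α}
    (hγ : γ.SameCycle x y) (hσ : σ.SameCycle x y) :
    IsGeodesic (swap x y * γ) (swap x y * σ) ↔ IsGeodesic γ σ := by
  rcases eq_or_ne x y with rfl | hxy
  · rw [swap_self, ← Perm.one_def, one_mul, one_mul]
  · have h : swap x y * σ * (swap x y * γ)⁻¹ = swap x y * (σ * γ⁻¹) * (swap x y)⁻¹ := by group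
    rw [IsGeodesic, IsGeodesic, h, numCycles_conj, numCycles_swap_mul hγ hxy,
      numCycles_swap_mul hσ hxy]
    omega

theorem invariantFunctions_inf_le (γ σ : Perm α) :
    invariantFunctions σ ⊓ invariantFunctions (σ * γ⁻¹) ≤ invariantFunctions γ := by
  rintro f ⟨hσ, hσγ⟩ a
  calc f (γ a) = f (σ a) := by simpa using (hσγ (γ a)).symm
    _ = f a := hσ a

variable [Finite α] [Finite β]

theorem numCycles_add_numCycles_mul_inv_le (γ σ : Perm α) :
    numCycles σ + numCycles (σ * γ⁻¹) ≤ Nat.card α + numCycles γ :=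
  (numCycles_add_numCycles_le _ _).trans <| Nat.add_le_add_left
    ((Submodule.finrank_mono (invariantFunctions_inf_le γ σ)).trans_eq
      (finrank_invariantFunctions γ)) _

theorem IsGeodesic.invariantFunctions_le {γ σ : Perm α} (h : IsGeodesic γ σ) :
    invariantFunctions γ ≤ invariantFunctions σ := by
  have hle := numCycles_add_numCycles_le σ (σ * γ⁻¹)
  rw [h, ← finrank_invariantFunctions] at hle
  rw [← Submodule.eq_of_le_of_finrank_le (invariantFunctions_inf_le γ σ)
    (Nat.le_of_add_le_add_left hle)]
  exact inf_le_left

theorem IsGeodesic.mapsTo {γ σ : Perm α} (h : IsGeodesic γ σ) {S : Set α} (hS : Set.MapsTo γ S S) :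
    Set.MapsTo σ S S :=
  indicator_one_mem_invariantFunctions_iff.1
    (h.invariantFunctions_le (indicator_one_mem_invariantFunctions_iff.2 hS))

theorem isGeodesic_sumCongr_iff {γ₁ σ₁ : Perm α} {γ₂ σ₂ : Perm β} :
    IsGeodesic (Perm.sumCongr γ₁ γ₂) (Perm.sumCongr σ₁ σ₂) ↔
      IsGeodesic γ₁ σ₁ ∧ IsGeodesic γ₂ σ₂ := by
  have h₁ := numCycles_add_numCycles_mul_inv_le γ₁ σ₁
  have h₂ := numCycles_add_numCycles_mul_inv_le γ₂ σ₂
  simp only [IsGeodesic, Perm.sumCongr_inv, Perm.sumCongr_mul, numCycles_sumCongr, Nat.card_sum]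
  omega

theorem IsGeodesic.exists_eq_sumCongr {γ₁ : Perm α} {γ₂ : Perm β} {σ : Perm (α ⊕ β)}
    (h : IsGeodesic (Perm.sumCongr γ₁ γ₂) σ) : ∃ σ₁ σ₂, σ = Perm.sumCongr σ₁ σ₂ := by
  have hγ : Set.MapsTo (Perm.sumCongr γ₁ γ₂) (Set.range Sum.inl) (Set.range Sum.inl) := by
    rintro _ ⟨a, rfl⟩
    exact ⟨γ₁ a, rfl⟩
  obtain ⟨⟨σ₁, σ₂⟩, rfl⟩ := Perm.mem_sumCongrHom_range_of_perm_mapsTo_inl (h.mapsTo hγ)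
  exact ⟨σ₁, σ₂, rfl⟩

end IsGeodesic

section GeodesicCount

/-- The number of permutations on a geodesic from `1` to `γ`. -/
noncomputable def geodesicCount (γ : Perm α) : ℕ :=
  Nat.card {σ : Perm α // IsGeodesic γ σ}

/-- The number of permutations on a geodesic from `1` to `γ` that send `x` to `y`. -/
noncomputable def geodesicCountAt (γ : Perm α) (x y : α) : ℕ :=
  Nat.card {σ : Perm α // IsGeodesic γ σ ∧ σ x = y}

theorem geodesicCount_of_subsingleton [Subsingleton α] (γ : Perm α) : geodesicCount γ = 1 :=
  Nat.card_eq_one_iff_unique.2 ⟨inferInstance, ⟨γ, isGeodesic_self γ⟩⟩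

theorem geodesicCountAt_of_subsingleton [Subsingleton α] (γ : Perm α) (x y : α) :
    geodesicCountAt γ x y = 1 :=
  Nat.card_eq_one_iff_unique.2
    ⟨inferInstance, ⟨γ, isGeodesic_self γ, Subsingleton.elim _ _⟩⟩

theorem geodesicCount_eq_sum [Fintype α] (γ : Perm α) (x : α) :
    geodesicCount γ = ∑ y, geodesicCountAt γ x y := by
  let image (σ : {σ : Perm α // IsGeodesic γ σ}) : α := σ.1 x
  calc geodesicCount γ = Nat.card (Σ y, {σ // image σ = y}) :=
        (Nat.card_congr (Equiv.sigmaFiberEquiv image)).symm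
    _ = ∑ y, Nat.card {σ // image σ = y} := Nat.card_sigma
    _ = ∑ y, geodesicCountAt γ x y := Finset.sum_congr rfl fun y _ =>
        Nat.card_congr (Equiv.subtypeSubtypeEquivSubtypeInter _ fun σ : Perm α => σ x = y)

theorem geodesicCountAt_permCongr (e : α ≃ β) (γ : Perm α) (x y : α) :
    geodesicCountAt (e.permCongr γ) (e x) (e y) = geodesicCountAt γ x y := by
  refine (Nat.card_congr (e.permCongr.subtypeEquiv fun σ => ?_)).symm
  simp [isGeodesic_permCongr_iff]

theorem geodesicCountAt_apply_eq_self (γ : Perm α) (x : α) :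
    geodesicCountAt γ x (γ x) = geodesicCountAt γ x x := by
  let kreweras : Perm α ≃ Perm α := (Equiv.inv _).trans (Equiv.mulLeft γ)
  refine (Nat.card_congr (kreweras.subtypeEquiv fun σ => ?_)).symm
  have hfix : (γ * σ⁻¹) x = γ x ↔ σ x = x := by
    rw [Perm.mul_apply, γ.injective.eq_iff, Perm.inv_eq_iff_eq, eq_comm]
  exact (and_congr (isGeodesic_mul_inv_iff γ σ) hfix).symm

variable [Finite α] [Finite β]

theorem geodesicCountAt_swap_mul [DecidableEq α] {γ : Perm α} {x y : α} (h : γ.SameCycle x y) :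
    geodesicCountAt (swap x y * γ) x x = geodesicCountAt γ x y := by
  refine (Nat.card_congr ((Equiv.mulLeft (swap x y)).subtypeEquiv fun σ => ?_)).symm
  have hfix : (swap x y * σ) x = x ↔ σ x = y := by
    rw [Perm.mul_apply, swap_apply_eq_iff, swap_apply_left]
  rw [Equiv.coe_mulLeft, hfix, and_congr_left_iff]
  intro hσ
  exact (isGeodesic_swap_mul_iff h ⟨1, hσ⟩).symm

theorem geodesicCountAt_sumCongr (γ₁ : Perm α) (γ₂ : Perm β) (x y : α) :
    geodesicCountAt (Perm.sumCongr γ₁ γ₂) (Sum.inl x) (Sum.inl y) =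
      geodesicCountAt γ₁ x y * geodesicCount γ₂ := by
  rw [geodesicCountAt, geodesicCountAt, geodesicCount, ← Nat.card_prod]
  symm
  refine Nat.card_eq_of_bijective (fun p => ⟨Perm.sumCongr p.1.1 p.2.1,
    isGeodesic_sumCongr_iff.2 ⟨p.1.2.1, p.2.2⟩, congrArg Sum.inl p.1.2.2⟩) ⟨?_, ?_⟩
  · rintro ⟨⟨σ₁, _⟩, σ₂, _⟩ ⟨⟨τ₁, _⟩, τ₂, _⟩ h
    have := @Perm.sumCongrHom_injective α β (σ₁, σ₂) (τ₁, τ₂) (congrArg Subtype.val h)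
    simpa using this
  · rintro ⟨σ, hσ, hx⟩
    obtain ⟨σ₁, σ₂, rfl⟩ := hσ.exists_eq_sumCongr
    obtain ⟨h₁, h₂⟩ := isGeodesic_sumCongr_iff.1 hσ
    exact ⟨(⟨σ₁, h₁, Sum.inl_injective hx⟩, ⟨σ₂, h₂⟩), rfl⟩

end GeodesicCount

section FinRotate

theorem sameCycle_finRotate {n : ℕ} (i j : Fin n) : (finRotate n).SameCycle i j := by
  cases n with
  | zero => exact i.elim0
  | succ n =>
    suffices h : ∀ i, (finRotate (n + 1)).SameCycle 0 i from (h i).symm.trans (h j)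
    intro i
    induction i using Fin.induction with
    | zero => exact .rfl
    | succ i ih =>
      rwa [← Fin.coeSucc_eq_succ, ← finRotate_apply, Perm.sameCycle_apply_right]

theorem numCycles_finRotate_succ (n : ℕ) : numCycles (finRotate (n + 1)) = 1 :=
  numCycles_eq_one sameCycle_finRotate

theorem val_finRotate {n : ℕ} (i : Fin n) :
    (finRotate n i : ℕ) = if (i : ℕ) + 1 = n then 0 else (i : ℕ) + 1 := by
  cases n with
  | zero => exact i.elim0
  | succ n => simp only [coe_finRotate, Fin.ext_iff, Fin.val_last, Nat.add_right_cancel_iff]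

theorem val_swap_mul_finRotate {n : ℕ} (j i : Fin (n + 1)) :
    ((swap 0 (finRotate (n + 1) j) * finRotate (n + 1)) i : ℕ) =
      if i = j then 0 else if (i : ℕ) = n then (j : ℕ) + 1 else (i : ℕ) + 1 := by
  rw [Perm.mul_apply]
  rcases eq_or_ne i j with rfl | hij
  · simp
  · rcases eq_or_ne i (Fin.last n) with rfl | hlast
    · rw [finRotate_last, swap_apply_left, coe_finRotate_of_ne_last hij.symm]
      simp [hij]
    · have hval := coe_finRotate_of_ne_last hlast
      have h0 : finRotate (n + 1) i ≠ 0 := fun h => by simp [h] at hval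
      have hne : (i : ℕ) ≠ n := fun h => hlast (Fin.ext h)
      rw [swap_apply_of_ne_of_ne h0 ((finRotate (n + 1)).injective.ne hij), hval, if_neg hij,
        if_neg hne]

theorem swap_mul_finRotate {n j m : ℕ} (h : j + 1 + m = n + 1) :
    swap 0 (finRotate (n + 1) ⟨j, by omega⟩) * finRotate (n + 1) =
      (finSumFinEquiv.trans (finCongr h)).permCongr
        (Perm.sumCongr (finRotate (j + 1)) (finRotate m)) := by
  set e := finSumFinEquiv.trans (finCongr h)
  have hinl (a : Fin (j + 1)) : (e (Sum.inl a) : ℕ) = a := rfl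
  have hinr (b : Fin m) : (e (Sum.inr b) : ℕ) = j + 1 + b := rfl
  refine Equiv.ext fun z => Fin.ext ?_
  obtain ⟨w, rfl⟩ := e.surjective z
  rw [val_swap_mul_finRotate, Equiv.permCongr_apply, Equiv.symm_apply_apply]
  rcases w with a | b
  · rw [Perm.sumCongr_apply, Sum.map_inl]
    simp only [Fin.ext_iff, hinl, val_finRotate]
    split_ifs <;> omega
  · rw [Perm.sumCongr_apply, Sum.map_inr]
    simp only [Fin.ext_iff, hinr, val_finRotate]
    split_ifs <;> omega

theorem geodesicCountAt_finRotate {n j m : ℕ} (h : j + 1 + m = n + 1) :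
    geodesicCountAt (finRotate (n + 1)) 0 (finRotate (n + 1) ⟨j, by omega⟩) =
      geodesicCountAt (finRotate (j + 1)) 0 0 * geodesicCount (finRotate m) := by
  have h0 : finSumFinEquiv.trans (finCongr h) (Sum.inl 0) = 0 := rfl
  rw [← geodesicCountAt_swap_mul (sameCycle_finRotate _ _), swap_mul_finRotate h, ← h0,
    geodesicCountAt_permCongr, geodesicCountAt_sumCongr]

theorem geodesicCountAt_finRotate_zero_zero (n : ℕ) :
    geodesicCountAt (finRotate (n + 1)) 0 0 = geodesicCount (finRotate n) := by
  have h := geodesicCountAt_finRotate (by omega : 0 + 1 + n = n + 1)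
  have hone : geodesicCountAt (finRotate (0 + 1)) 0 0 = 1 :=
    geodesicCountAt_of_subsingleton (α := Fin 1) _ _ _
  rwa [hone, one_mul, Fin.mk_zero, geodesicCountAt_apply_eq_self] at h

theorem geodesicCount_finRotate_succ (n : ℕ) :
    geodesicCount (finRotate (n + 1)) =
      ∑ i : Fin (n + 1), geodesicCount (finRotate i) * geodesicCount (finRotate (n - i)) := by
  rw [geodesicCount_eq_sum _ 0, ← Equiv.sum_comp (finRotate (n + 1))]
  refine Finset.sum_congr rfl fun i _ => ?_
  rw [geodesicCountAt_finRotate (j := i) (m := n - i) (by omega),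
    geodesicCountAt_finRotate_zero_zero]

theorem geodesicCount_finRotate (n : ℕ) : geodesicCount (finRotate n) = catalan n := by
  induction n using Nat.strong_induction_on with
  | _ n ih =>
    cases n with
    | zero => rw [catalan_zero, geodesicCount_of_subsingleton]
    | succ n =>
      rw [geodesicCount_finRotate_succ, catalan_succ]
      refine Finset.sum_congr rfl fun i _ => ?_
      rw [ih i (by omega), ih (n - i) (by omega)]

end FinRotate

theorem catalan_eq_choose_div (k : ℕ) :
    catalan k = Nat.choose (2 * k + 1) k / (2 * k + 1) := by
  refine (Nat.div_eq_of_eq_mul_right (Nat.succ_pos _) ?_).symm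
  refine Nat.eq_of_mul_eq_mul_right (Nat.succ_pos k) ?_
  calc Nat.choose (2 * k + 1) k * (k + 1)
      = Nat.choose (2 * k + 1) (k + 1) * (k + 1) := by rw [Nat.choose_symm_half]
    _ = (2 * k + 1) * k.centralBinom := (Nat.add_one_mul_choose_eq (2 * k) k).symm
    _ = (2 * k + 1) * catalan k * (k + 1) := by
        rw [← succ_mul_catalan_eq_centralBinom, mul_assoc, mul_comm (k + 1)]

/-- Counting the leading-order graphs for `D = 2`: with `γ = (1 2 … k)` the standard
`k`-cycle, the number of permutations `σ` with `c(σ) + c(σ ∘ γ⁻¹) = k + 1`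
(the planarity condition) equals `(1/(2k+1))·binomial(2k+1, k)`, the `k`-th
Catalan number. -/
theorem count_leading_order_D2 (k : ℕ) (hk : 1 ≤ k) :
    Nat.card {σ : Equiv.Perm (Fin k) //
        cycleCount σ + cycleCount (σ * (finRotate k)⁻¹) = k + 1} =
      Nat.choose (2 * k + 1) k / (2 * k + 1) := by
  obtain ⟨n, rfl⟩ := Nat.exists_eq_succ_of_ne_zero (Nat.one_le_iff_ne_zero.1 hk)
  have hiff (σ : Perm (Fin (n + 1))) :
      cycleCount σ + cycleCount (σ * (finRotate (n + 1))⁻¹) = n + 1 + 1 ↔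
        IsGeodesic (finRotate (n + 1)) σ := by
    rw [IsGeodesic, Nat.card_fin, numCycles_finRotate_succ]
    rfl
  calc _ = geodesicCount (finRotate (n + 1)) := Nat.card_congr (Equiv.subtypeEquivRight hiff)
    _ = catalan (n + 1) := geodesicCount_finRotate (n + 1)
    _ = _ := catalan_eq_choose_div (n + 1)
end
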